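/- arXiv:1905.10153 — 3 statements merged into one kernel-verified Lean document; each statement's English description precedes it below -/
import Mathlib

section
/- If p is an odd prime and G is a non-cyclic group of order p^λ, then the total number of subgroups of G is at least (p+1)(λ−1)+2. -/
theorem aux_mul_pow {G : Type*} [Group G] (x y c : G) (hx : Commute c x) (hy : Commute c y)
    (h : y * x = x * y * c) (n : ℕ) :
    y ^ n * x = x * y ^ n * c ^ n ∧ (x * y) ^ n = x ^ n * y ^ n * c ^ (n.choose 2) := by
  induction n with
  | zero => simp
  | succ n ih =>
    obtain ⟨h1, h2⟩ := ih
    have h3 : y ^ (n+1) * x = x * y ^ (n+1) * c ^ (n+1) := by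
      calc y ^ (n+1) * x = y ^ n * (y * x) := by rw [pow_succ]; group
        _ = (y ^ n * x) * y * c := by rw [h]; group
        _ = x * y ^ n * (c ^ n * y) * c := by rw [h1]; group
        _ = x * y ^ n * (y * c ^ n) * c := by rw [(hy.pow_left n).eq]
        _ = _ := by rw [pow_succ, pow_succ]; group
    refine ⟨h3, ?_⟩
    have hc : Nat.choose (n+1) 2 = n + n.choose 2 := by
      rw [Nat.choose_succ_succ' n 1, Nat.choose_one_right]
    calc (x * y) ^ (n+1) = x ^ n * y ^ n * (c ^ (n.choose 2) * (x * y)) := by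
          rw [pow_succ, h2]; simp only [mul_assoc]
      _ = x ^ n * y ^ n * ((x * y) * c ^ (n.choose 2)) := by
          rw [((hx.mul_right hy).pow_left _).eq]
      _ = x ^ n * (y ^ n * x) * y * c ^ (n.choose 2) := by simp only [mul_assoc]
      _ = x ^ n * x * y ^ n * (c ^ n * y) * c ^ (n.choose 2) := by
          rw [h1]; simp only [mul_assoc]
      _ = x ^ n * x * y ^ n * (y * c ^ n) * c ^ (n.choose 2) := by rw [(hy.pow_left n).eq]
      _ = _ := by rw [hc, pow_add c, pow_succ x, pow_succ y]; simp only [mul_assoc]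

theorem aux_comm {G : Type*} [Group G] (H : Subgroup G) (hH : IsCyclic H) {a b : G}
    (ha : a ∈ H) (hb : b ∈ H) : a * b = b * a := by
  obtain ⟨g, hg⟩ := hH.exists_generator
  obtain ⟨i, hi⟩ := Subgroup.mem_zpowers_iff.1 (hg ⟨a, ha⟩)
  obtain ⟨j, hj⟩ := Subgroup.mem_zpowers_iff.1 (hg ⟨b, hb⟩)
  have : (⟨a, ha⟩ : H) * ⟨b, hb⟩ = ⟨b, hb⟩ * ⟨a, ha⟩ := by
    rw [← hi, ← hj, ← zpow_add, ← zpow_add, add_comm]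
  exact congrArg Subtype.val this

theorem aux_max {p : ℕ} (hp : p.Prime) {G : Type*} [Group G] {n : ℕ}
    (hcard : Nat.card G = p ^ (n+1)) (H : Subgroup G) (hH : Nat.card H = p ^ n) :
    H.index = p ∧ H.Normal ∧ commutator G ≤ H ∧ ∀ T, H ≤ T → T ≠ H → T = ⊤ := by
  have hi : H.index = p := by
    have := H.card_mul_index
    rw [hH, hcard, pow_succ] at this
    exact Nat.eq_of_mul_eq_mul_left (pow_pos hp.pos n) this
  have hN : H.Normal := by
    apply Subgroup.normal_of_index_eq_minFac_card
    rw [hi, hcard, hp.pow_minFac (by omega)]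
  refine ⟨hi, hN, ?_, ?_⟩
  · rw [← Subgroup.Normal.quotient_commutative_iff_commutator_le]
    have : Fact p.Prime := ⟨hp⟩
    have : IsCyclic (G ⧸ H) := isCyclic_of_prime_card (p := p) hi
    infer_instance
  · intro T hT hne
    have h1 := Subgroup.relIndex_mul_index hT
    rw [hi] at h1
    rcases (Nat.dvd_prime hp).1 (Dvd.intro_left _ h1) with h | h
    · exact Subgroup.index_eq_one.1 h
    · rw [h] at h1
      have : H.relIndex T = 1 := Nat.eq_of_mul_eq_mul_right hp.pos (by rw [h1, one_mul])
      exact absurd (le_antisymm (Subgroup.relIndex_eq_one.1 this) hT) hne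

open scoped commutatorElement in
theorem aux_cyclic {p : ℕ} (hp : p.Prime) (hodd : Odd p) (n : ℕ) :
    ∀ (G : Type*) [Group G] (_ : Nat.card G = p ^ n) (Z : Subgroup G)
      (_ : Nat.card Z ≤ p) (_ : ∀ x : G, x ^ p = 1 → x ∈ Z), IsCyclic G := by
  have : Fact p.Prime := ⟨hp⟩
  induction n with
  | zero =>
    intro G _ hc Z _ _
    have : Subsingleton G := (Nat.card_eq_one_iff_unique.1 (by simpa using hc)).1
    infer_instance
  | succ n ih =>
    intro G _ hc Z hZ hx
    have : Finite G := Nat.finite_of_card_ne_zero (by rw [hc]; exact (pow_pos hp.pos _).ne')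
    by_contra hnc
    have hsub : ∀ H : Subgroup G, Nat.card H = p ^ n → IsCyclic H := by
      intro H hH
      refine ih H hH (Z.subgroupOf H) (le_trans ?_ hZ) ?_
      · refine Nat.card_le_card_of_injective
          (fun x : Z.subgroupOf H => (⟨x.1.1, Subgroup.mem_subgroupOf.1 x.2⟩ : Z)) ?_
        intro a b hab
        apply Subtype.ext
        apply Subtype.ext
        exact Subtype.mk.inj hab
      · intro x hxp
        rw [Subgroup.mem_subgroupOf]
        apply hx
        exact congrArg Subtype.val hxp
    have hdvd : p ^ n ∣ Nat.card G := by rw [hc]; exact pow_dvd_pow _ (by omega)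
    obtain ⟨H, hH⟩ := Sylow.exists_subgroup_card_pow_prime p hdvd
    obtain ⟨hHi, hHN, hHc, hHm⟩ := aux_max hp hc H hH
    obtain ⟨g, hg⟩ : ∃ g, g ∉ H := by
      by_contra! h
      have : H = ⊤ := by ext; simp [h]
      rw [this, Subgroup.index_top] at hHi
      exact hp.one_lt.ne hHi
    obtain ⟨k, hk, hgk⟩ := (Nat.dvd_prime_pow hp).1 (hc ▸ orderOf_dvd_natCard g)
    have hkn : k ≤ n := by
      by_contra h
      have : k = n + 1 := by omega
      subst this
      exact hnc (isCyclic_of_orderOf_eq_card g (by rw [hgk, hc]))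
    obtain ⟨K, hK, hgK⟩ := Sylow.exists_subgroup_card_pow_prime_le p hdvd (Subgroup.zpowers g)
      (by rw [Nat.card_zpowers, hgk]) hkn
    have hgK' : g ∈ K := hgK (Subgroup.mem_zpowers g)
    obtain ⟨hKi, hKN, hKc, hKm⟩ := aux_max hp hc K hK
    have hHcyc := hsub H hH
    have hKcyc := hsub K hK
    have hcen : ∀ d ∈ H ⊓ K, ∀ x : G, Commute d x := by
      intro d hd x
      have : Subgroup.centralizer {d} = ⊤ := by
        apply hHm
        · intro h hh
          rw [Subgroup.mem_centralizer_singleton_iff]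
          first | exact aux_comm H hHcyc hh hd.1 | exact aux_comm H hHcyc hd.1 hh
        · intro he
          apply hg
          rw [← he, Subgroup.mem_centralizer_singleton_iff]
          first | exact aux_comm K hKcyc hgK' hd.2 | exact aux_comm K hKcyc hd.2 hgK'
      have hxm : x ∈ Subgroup.centralizer {d} := by rw [this]; trivial
      rw [Subgroup.mem_centralizer_singleton_iff] at hxm
      first | exact hxm | exact hxm.symm
    have hpow : ∀ x : G, x ^ p ∈ H ⊓ K := fun x =>
      ⟨by simpa [hHi] using H.pow_index_mem x, by simpa [hKi] using K.pow_index_mem x⟩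
    have hmul : ∀ x y : G, (x * y) ^ p = x ^ p * y ^ p := by
      intro x y
      have hcm : ⁅y⁻¹, x⁻¹⁆ ∈ H ⊓ K := by
        have : ⁅y⁻¹, x⁻¹⁆ ∈ commutator G :=
          Subgroup.commutator_mem_commutator (Subgroup.mem_top _) (Subgroup.mem_top _)
        exact ⟨hHc this, hKc this⟩
      have hyx : y * x = x * y * ⁅y⁻¹, x⁻¹⁆ := by
        rw [commutatorElement_def]; group
      obtain ⟨h1, h2⟩ := aux_mul_pow x y _ (hcen _ hcm x) (hcen _ hcm y) hyx p
      rw [(hcen _ (hpow y) x).eq] at h1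
      have hcp : ⁅y⁻¹, x⁻¹⁆ ^ p = 1 := by simpa using h1
      have h3 : p ∣ p.choose 2 := hp.dvd_choose_self (by norm_num) (by
        have := hp.two_le
        rcases hodd with ⟨m, hm⟩
        omega)
      obtain ⟨q, hq⟩ := h3
      rw [h2, hq, pow_mul, hcp, one_pow, mul_one]
    let f : G →* G := MonoidHom.mk' (fun x => x ^ p) hmul
    have hker : f.ker ≤ Z := fun x hxk => hx x hxk
    have hran : f.range ≤ H ⊓ K := by
      rintro _ ⟨x, rfl⟩
      exact hpow x
    have h1 : Nat.card f.ker * Nat.card f.range = p ^ (n+1) := by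
      rw [← Subgroup.index_ker, Subgroup.card_mul_index, hc]
    have h2 : Nat.card f.ker ≤ p := (Subgroup.card_le_of_le hker).trans hZ
    have h3 : Nat.card f.range ≤ Nat.card (H ⊓ K : Subgroup G) := Subgroup.card_le_of_le hran
    have h4 : Nat.card (H ⊓ K : Subgroup G) < p ^ n := by
      by_contra h
      have e : H ⊓ K = K := Subgroup.eq_of_le_of_card_ge inf_le_right (by rw [hK]; omega)
      have : K ≤ H := inf_eq_right.1 e
      exact hg (this hgK')
    have h5 : p ^ (n+1) < p ^ (n+1) := by
      calc p ^ (n+1) = Nat.card f.ker * Nat.card f.range := h1.symm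
        _ ≤ p * Nat.card f.range := Nat.mul_le_mul_right _ h2
        _ < p * p ^ n := Nat.mul_lt_mul_of_pos_left (by omega) hp.pos
        _ = p ^ (n+1) := by rw [pow_succ, mul_comm]
    exact lt_irrefl _ h5

theorem aux_bound {G : Type*} [Group G] [Finite G] (a z : G) (m : ℕ) (hm : 0 < m)
    (h : ∀ x : G, ∃ j : ℤ, (a ^ j)⁻¹ * x ∈ Subgroup.zpowers z)
    (ham : a ^ m ∈ Subgroup.zpowers z) : Nat.card G ≤ m * orderOf z := by
  have : Function.Surjective (fun q : Fin m × Subgroup.zpowers z => a ^ (q.1 : ℕ) * (q.2 : G)) := by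
    intro x
    obtain ⟨j, hj⟩ := h x
    have hm' : (m : ℤ) ≠ 0 := by omega
    have h0 := Int.emod_nonneg j hm'
    have h1 := Int.emod_lt_of_pos j (show (0:ℤ) < m by omega)
    refine ⟨(⟨(j % m).toNat, by omega⟩,
      ⟨(a ^ m) ^ (j / m) * ((a ^ j)⁻¹ * x), mul_mem (zpow_mem ham _) hj⟩), ?_⟩
    simp only
    have e : a ^ j = a ^ (j % m).toNat * (a ^ m) ^ (j / m) := by
      rw [← zpow_natCast, ← zpow_natCast, ← zpow_mul, ← zpow_add, Int.toNat_of_nonneg h0,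
        Int.emod_add_mul_ediv]
    rw [← mul_assoc, ← e]
    group
  have := Nat.card_le_card_of_surjective _ this
  simpa [Nat.card_prod, Nat.card_zpowers] using this

theorem aux_center {p : ℕ} (hp : p.Prime) {G : Type*} [Group G] {n : ℕ}
    (hcard : Nat.card G = p ^ (n+1)) : ∃ z ∈ Subgroup.center G, orderOf z = p := by
  have : Fact p.Prime := ⟨hp⟩
  have : Finite G := Nat.finite_of_card_ne_zero (by rw [hcard]; exact (pow_pos hp.pos _).ne')
  have : Nontrivial G := by
    rw [← Finite.one_lt_card_iff_nontrivial, hcard]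
    exact Nat.one_lt_pow (by omega) hp.one_lt
  have hG : IsPGroup p G := IsPGroup.of_card hcard
  have := hG.center_nontrivial
  obtain ⟨k, hk, hck⟩ := (hG.to_subgroup (Subgroup.center G)).nontrivial_iff_card.1 inferInstance
  obtain ⟨z, hz⟩ := exists_prime_orderOf_dvd_card' (G := Subgroup.center G) p
    (by rw [hck]; exact dvd_pow_self _ (by omega))
  exact ⟨z, z.2, by rw [Subgroup.orderOf_coe, hz]⟩

theorem aux_quot {p : ℕ} (hp : p.Prime) {G : Type*} [Group G] {n : ℕ}
    (hcard : Nat.card G = p ^ (n+3)) (hnc : ¬ IsCyclic G) :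
    ∃ z ∈ Subgroup.center G, orderOf z = p ∧
      ¬ ∃ a : G, ∀ x : G, ∃ j : ℤ, (a ^ j)⁻¹ * x ∈ Subgroup.zpowers z := by
  have : Fact p.Prime := ⟨hp⟩
  have : Finite G := Nat.finite_of_card_ne_zero (by rw [hcard]; exact (pow_pos hp.pos _).ne')
  obtain ⟨z, hzc, hzo⟩ := aux_center hp hcard
  by_cases h : ∃ a : G, ∀ x : G, ∃ j : ℤ, (a ^ j)⁻¹ * x ∈ Subgroup.zpowers z
  swap
  · exact ⟨z, hzc, hzo, h⟩
  obtain ⟨a, ha⟩ := h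
  have hform : ∀ x : G, ∃ i j : ℤ, x = a ^ j * z ^ i := by
    intro x
    obtain ⟨j, hj⟩ := ha x
    obtain ⟨i, hi⟩ := Subgroup.mem_zpowers_iff.1 hj
    exact ⟨i, j, by rw [hi]; group⟩
  have hzcomm : ∀ x, Commute x z := fun x => Subgroup.mem_center_iff.1 hzc x
  have hacen : ∀ x, Commute a x := by
    intro x
    obtain ⟨i, j, rfl⟩ := hform x
    exact ((Commute.refl a).zpow_right j).mul_right ((hzcomm a).zpow_right i)
  have hap : a ^ p ^ (n+2) = 1 := by
    obtain ⟨k, hk, hak⟩ := (Nat.dvd_prime_pow hp).1 (hcard ▸ orderOf_dvd_natCard a)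
    have : k ≤ n + 2 := by
      by_contra hh
      have : k = n + 3 := by omega
      subst this
      exact hnc (isCyclic_of_orderOf_eq_card a (by rw [hak, hcard]))
    rw [← orderOf_dvd_iff_pow_eq_one, hak]
    exact pow_dvd_pow _ this
  have hlt : p ^ (n+1) * p < p ^ (n+3) := by
    rw [← pow_succ]
    exact Nat.pow_lt_pow_right hp.one_lt (by omega)
  have hb : a ^ p ^ (n+1) ≠ 1 := by
    intro hb
    have := aux_bound a z (p ^ (n+1)) (pow_pos hp.pos _) ha (by rw [hb]; exact one_mem _)
    rw [hcard, hzo] at this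
    omega
  have hbo : orderOf (a ^ p ^ (n+1)) = p := by
    apply orderOf_eq_prime _ hb
    rw [← pow_mul, ← pow_succ, hap]
  refine ⟨a ^ p ^ (n+1), ?_, hbo, ?_⟩
  · rw [Subgroup.mem_center_iff]
    intro x
    exact ((hacen x).pow_left _).eq.symm
  · rintro ⟨a', ha'⟩
    have := aux_bound a' _ (p ^ (n+1)) (pow_pos hp.pos _) ha' (by
      obtain ⟨i, j, rfl⟩ := hform a'
      rw [((hacen (z ^ i)).zpow_left j).mul_pow]
      have hz1 : (z ^ i) ^ p ^ (n+1) = 1 := by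
        have : z ^ p ^ (n+1) = 1 := by
          rw [← orderOf_dvd_iff_pow_eq_one, hzo]
          exact dvd_pow_self _ (by omega)
        rw [← zpow_natCast, zpow_comm, zpow_natCast, this, one_zpow]
      rw [hz1, mul_one, ← zpow_natCast (a ^ j), zpow_comm, zpow_natCast]
      exact zpow_mem (Subgroup.mem_zpowers _) _)
    rw [hcard, hbo] at this
    omega

theorem aux_step {p : ℕ} (hp : p.Prime) {G : Type*} [Group G] [Finite G] (z y : G)
    (hz : z ∈ Subgroup.center G) (hzo : orderOf z = p) (hy : y ^ p = 1)
    (hyz : y ∉ Subgroup.zpowers z) [(Subgroup.zpowers z).Normal] :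
    Nat.card (Subgroup (G ⧸ Subgroup.zpowers z)) + (p + 1) ≤ Nat.card (Subgroup G) := by
  have : Fact p.Prime := ⟨hp⟩
  have hcomm : ∀ x, Commute x z := fun x => Subgroup.mem_center_iff.1 hz x
  have hzp : z ^ p = 1 := by rw [← hzo, pow_orderOf_eq_one]
  have hz1 : z ≠ 1 := by
    rintro rfl
    rw [orderOf_one] at hzo
    exact hp.one_lt.ne hzo
  have hord : ∀ i : ℕ, orderOf (y * z ^ i) = p := by
    intro i
    apply orderOf_eq_prime
    · rw [((hcomm y).pow_right i).mul_pow, hy, one_mul, ← pow_mul, mul_comm, pow_mul, hzp, one_pow]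
    · intro h
      apply hyz
      rw [eq_inv_of_mul_eq_one_left h]
      exact inv_mem (pow_mem (Subgroup.mem_zpowers z) i)
  have hnot : ∀ i : ℕ, z ∉ Subgroup.zpowers (y * z ^ i) := by
    intro i h
    have h1 : Subgroup.zpowers z ≤ Subgroup.zpowers (y * z ^ i) := by
      rwa [Subgroup.zpowers_le]
    have h2 := Subgroup.eq_of_le_of_card_ge h1 (by
      rw [Nat.card_zpowers, Nat.card_zpowers, hord, hzo])
    apply hyz
    have h3 : y * z ^ i ∈ Subgroup.zpowers z := h2 ▸ Subgroup.mem_zpowers _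
    exact (Subgroup.mul_mem_cancel_right _ (pow_mem (Subgroup.mem_zpowers z) i)).1 h3
  have hne : ∀ i j : ℕ, i < j → j < p →
      Subgroup.zpowers (y * z ^ i) ≠ Subgroup.zpowers (y * z ^ j) := by
    intro i j hij hj he
    have h1 : y * z ^ j ∈ Subgroup.zpowers (y * z ^ i) := he ▸ Subgroup.mem_zpowers _
    have h2 : z ^ (j - i) ∈ Subgroup.zpowers (y * z ^ i) := by
      have e : y * z ^ j = y * z ^ i * z ^ (j - i) := by
        rw [mul_assoc, ← pow_add]; congr 2; omega
      rw [e] at h1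
      exact (Subgroup.mul_mem_cancel_left _ (Subgroup.mem_zpowers _)).1 h1
    have hcop : (orderOf z).Coprime (j - i) := by
      rw [hzo]
      exact Nat.coprime_of_lt_prime (by omega) (by omega) hp
    obtain ⟨m, hm⟩ := exists_pow_eq_self_of_coprime hcop.symm
    have h4 := pow_mem h2 m
    rw [hm] at h4
    exact hnot i h4
  let f : Subgroup (G ⧸ Subgroup.zpowers z) ⊕ Option (Fin p) → Subgroup G := fun s =>
    match s with
    | Sum.inl T => T.comap (QuotientGroup.mk' _)
    | Sum.inr none => ⊥
    | Sum.inr (some i) => Subgroup.zpowers (y * z ^ (i : ℕ))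
  have hl : ∀ T, z ∈ f (Sum.inl T) := by
    intro T
    change (QuotientGroup.mk' (Subgroup.zpowers z)) z ∈ T
    have : (QuotientGroup.mk' (Subgroup.zpowers z)) z = 1 :=
      (QuotientGroup.eq_one_iff z).2 (Subgroup.mem_zpowers z)
    rw [this]
    exact one_mem _
  have hr : ∀ o, z ∉ f (Sum.inr o) := by
    rintro (_ | i)
    · exact fun h => hz1 (Subgroup.mem_bot.1 h)
    · exact hnot i
  have hbot : ∀ i : ℕ, (⊥ : Subgroup G) ≠ Subgroup.zpowers (y * z ^ i) := by
    intro i h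
    have := Subgroup.zpowers_eq_bot.1 h.symm
    have h2 := hord i
    rw [this, orderOf_one] at h2
    exact hp.one_lt.ne h2
  have hf : Function.Injective f := by
    rintro (S | o) (T | o') h
    · exact congrArg Sum.inl (Subgroup.comap_injective (QuotientGroup.mk'_surjective _) h)
    · exact absurd (h ▸ hl S) (hr o')
    · exact absurd (h ▸ hl T) (hr o)
    · rcases o with _ | i <;> rcases o' with _ | j
      · rfl
      · exact absurd h (hbot j)
      · exact absurd h.symm (hbot i)
      · rcases lt_trichotomy (i : ℕ) j with hij | hij | hij
        · exact absurd h (hne _ _ hij j.2)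
        · rw [Fin.ext hij]
        · exact absurd h.symm (hne _ _ hij i.2)
  have := Nat.card_le_card_of_injective f hf
  simpa [Nat.card_sum] using this

theorem aux_normal {G : Type*} [Group G] (z : G) (hz : z ∈ Subgroup.center G) :
    (Subgroup.zpowers z).Normal := by
  have hle : Subgroup.zpowers z ≤ Subgroup.center G := by rwa [Subgroup.zpowers_le]
  refine ⟨fun n hn g => ?_⟩
  rw [Subgroup.mem_center_iff.1 (hle hn) g, mul_inv_cancel_right]
  exact hn

theorem aux_main {p : ℕ} (hp : p.Prime) (hodd : Odd p) (n : ℕ) :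
    ∀ (G : Type*) [Group G] (_ : Nat.card G = p ^ (n+2)) (_ : ¬ IsCyclic G),
      (p + 1) * (n + 1) + 2 ≤ Nat.card (Subgroup G) := by
  have : Fact p.Prime := ⟨hp⟩
  induction n with
  | zero =>
    intro G _ hc hnc
    have : Finite G := Nat.finite_of_card_ne_zero (by rw [hc]; exact (pow_pos hp.pos _).ne')
    obtain ⟨z, hz, hzo⟩ := aux_center hp hc
    obtain ⟨y, hy, hyz⟩ : ∃ y : G, y ^ p = 1 ∧ y ∉ Subgroup.zpowers z := by
      by_contra! h
      exact hnc (aux_cyclic hp hodd _ G hc (Subgroup.zpowers z)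
        (by rw [Nat.card_zpowers, hzo]) h)
    have : (Subgroup.zpowers z).Normal := aux_normal z hz
    have h1 := aux_step hp z y hz hzo hy hyz
    have : Nontrivial (G ⧸ Subgroup.zpowers z) :=
      ⟨(y : G ⧸ Subgroup.zpowers z), 1, fun h => hyz ((QuotientGroup.eq_one_iff y).1 h)⟩
    have h2 : 1 < Nat.card (Subgroup (G ⧸ Subgroup.zpowers z)) :=
      Finite.one_lt_card
    omega
  | succ n ih =>
    intro G _ hc hnc
    have : Finite G := Nat.finite_of_card_ne_zero (by rw [hc]; exact (pow_pos hp.pos _).ne')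
    obtain ⟨z, hz, hzo, hzq⟩ := aux_quot hp hc hnc
    obtain ⟨y, hy, hyz⟩ : ∃ y : G, y ^ p = 1 ∧ y ∉ Subgroup.zpowers z := by
      by_contra! h
      exact hnc (aux_cyclic hp hodd _ G hc (Subgroup.zpowers z)
        (by rw [Nat.card_zpowers, hzo]) h)
    have : (Subgroup.zpowers z).Normal := aux_normal z hz
    have h1 := aux_step hp z y hz hzo hy hyz
    have h2 := ih (G ⧸ Subgroup.zpowers z) (by
      have h3 := Subgroup.card_eq_card_quotient_mul_card_subgroup (Subgroup.zpowers z)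
      rw [hc, Nat.card_zpowers, hzo] at h3
      apply Nat.eq_of_mul_eq_mul_right hp.pos
      rw [← h3, ← pow_succ]) (by
      intro hcyc
      obtain ⟨g, hg⟩ := hcyc.exists_generator
      obtain ⟨a, rfl⟩ := QuotientGroup.mk_surjective g
      refine hzq ⟨a, fun x => ?_⟩
      obtain ⟨j, hj⟩ := Subgroup.mem_zpowers_iff.1 (hg x)
      exact ⟨j, QuotientGroup.eq.1 (by rw [← hj]; rfl)⟩)
    have e : (p + 1) * (n + 1 + 1) = (p + 1) * (n + 1) + (p + 1) := by ring
    omega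

theorem odd_noncyclic_pGroup_total_subgroups_lower_bound
    (p lam : ℕ) (hp : p.Prime) (hodd : Odd p) (hlam : 2 ≤ lam)
    (G : Type*) [Group G] (hcard : Nat.card G = p ^ lam)
    (hnc : ¬ IsCyclic G) :
    (p + 1) * (lam - 1) + 2 ≤ Nat.card (Subgroup G) := by
  obtain ⟨n, rfl⟩ := Nat.exists_eq_add_of_le' hlam
  exact aux_main hp hodd n G hcard hnc
end

section
/- A non-cyclic 2-group of order 2^λ (λ ≥ 2) that is not generalized quaternion has at least 3 subgroups of order 2^k for every 1 ≤ k ≤ λ−1. -/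
lemma aux_three_le {α : Type*} [Finite α] (x y z : α) (h1 : x ≠ y) (h2 : x ≠ z) (h3 : y ≠ z) :
    3 ≤ Nat.card α := by
  classical
  have := Fintype.ofFinite α
  rw [Nat.card_eq_fintype_card]
  exact Fintype.two_lt_card_iff.2 ⟨x, y, z, h1, h2, h3⟩

lemma aux_cyc_invol {L : Type*} [Group L] [Finite L] [IsCyclic L] (u v : L) (hu : u ^ 2 = 1)
    (hv : v ^ 2 = 1) (hu1 : u ≠ 1) (hv1 : v ≠ 1) : u = v := by
  classical
  have := Fintype.ofFinite L
  by_contra h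
  have h1 := IsCyclic.card_pow_eq_one_le (α := L) (n := 2) (by norm_num)
  have h2 : 2 < (Finset.univ.filter (fun a : L => a ^ 2 = 1)).card :=
    Finset.two_lt_card_iff.2 ⟨1, u, v, by simp, by simp [hu], by simp [hv], hu1.symm, hv1.symm, h⟩
  omega

lemma aux_third {L : Type*} [Group L] (A B : Subgroup L) (hA : A.index = 2)
    (hB : B.index = 2) (hAB : ¬ A ≤ B) (hBA : ¬ B ≤ A) :
    ∃ C : Subgroup L, C.index = 2 ∧ C ≠ A ∧ C ≠ B := by
  obtain ⟨a, haA, haB⟩ := Set.not_subset.1 hAB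
  obtain ⟨b, hbB, hbA⟩ := Set.not_subset.1 hBA
  change a ∈ A at haA
  change a ∉ B at haB
  change b ∈ B at hbB
  change b ∉ A at hbA
  let C : Subgroup L :=
    { carrier := {x | x ∈ A ↔ x ∈ B}
      one_mem' := by simp [one_mem]
      mul_mem' := by
        intro x y hx hy
        simp only [Set.mem_ofPred_eq] at *
        rw [Subgroup.mul_mem_iff_of_index_two hA, Subgroup.mul_mem_iff_of_index_two hB, hx, hy]
      inv_mem' := by
        intro x hx
        simpa using hx }
  have hC : ∀ x, x ∈ C ↔ (x ∈ A ↔ x ∈ B) := fun x => Iff.rfl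
  refine ⟨C, ?_, ?_, ?_⟩
  · rw [Subgroup.index_eq_two_iff_exists_notMem_and]
    refine ⟨a, by rw [hC]; tauto, fun x => ?_⟩
    rw [hC, hC, Subgroup.mul_mem_iff_of_index_two hA, Subgroup.mul_mem_iff_of_index_two hB]
    tauto
  · intro h
    have := hC a
    rw [h] at this
    tauto
  · intro h
    have := hC b
    rw [h] at this
    tauto

lemma aux_index {L : Type*} [Group L] {k : ℕ} (hL : Nat.card L = 2 ^ (k + 1)) (A : Subgroup L) :
    A.index = 2 ↔ Nat.card A = 2 ^ k := by
  have h := A.card_mul_index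
  rw [hL, pow_succ] at h
  have : 0 < 2 ^ k := by positivity
  constructor
  · intro h2
    rw [h2] at h
    omega
  · intro h2
    rw [h2] at h
    exact Nat.eq_of_mul_eq_mul_left this h

lemma aux_cyclic_or {L : Type*} [Group L] {k : ℕ} (hL : Nat.card L = 2 ^ (k + 1)) :
    IsCyclic L ∨ 3 ≤ Nat.card {K : Subgroup L // Nat.card K = 2 ^ k} := by
  have : Finite L := Nat.finite_of_card_ne_zero (by rw [hL]; positivity)
  have : Fact (Nat.Prime 2) := ⟨Nat.prime_two⟩
  by_cases h : ∃ A B : Subgroup L, Nat.card A = 2 ^ k ∧ Nat.card B = 2 ^ k ∧ A ≠ B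
  · right
    obtain ⟨A, B, hA, hB, hAB⟩ := h
    obtain ⟨C, hC, h1, h2⟩ := aux_third A B ((aux_index hL A).2 hA) ((aux_index hL B).2 hB)
      (fun h => hAB (Subgroup.eq_of_le_of_card_ge h (by rw [hA, hB])))
      (fun h => hAB (Subgroup.eq_of_le_of_card_ge h (by rw [hA, hB])).symm)
    exact aux_three_le (⟨A, hA⟩ : {K : Subgroup L // Nat.card K = 2 ^ k}) ⟨B, hB⟩
      ⟨C, (aux_index hL C).1 hC⟩ (by simpa using hAB) (by simpa using h1.symm)
      (by simpa using h2.symm)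
  · left
    push Not at h
    obtain ⟨H, hH⟩ := Sylow.exists_subgroup_card_pow_prime (G := L) 2 (n := k)
      (by rw [hL]; exact pow_dvd_pow _ (by omega))
    have hx : ∃ x, x ∉ H := by
      by_contra hx
      push Not at hx
      have : H = ⊤ := by ext; simp [hx]
      rw [this, Subgroup.card_top, hL] at hH
      have := Nat.pow_right_injective (le_refl 2) hH
      omega
    obtain ⟨x, hx⟩ := hx
    have hd : Nat.card (Subgroup.zpowers x) ∣ 2 ^ (k + 1) := hL ▸ Subgroup.card_subgroup_dvd_card _
    obtain ⟨j, hj, hjc⟩ := (Nat.dvd_prime_pow Nat.prime_two).1 hd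
    rcases Nat.lt_or_ge k j with hkj | hkj
    · have : j = k + 1 := by omega
      subst this
      exact isCyclic_of_orderOf_eq_card x (by rw [← Nat.card_zpowers, hjc, hL])
    · obtain ⟨K, hK, hle⟩ := Sylow.exists_subgroup_card_pow_prime_le (G := L) 2 (m := k)
        (by rw [hL]; exact pow_dvd_pow _ (by omega)) _ hjc hkj
      exact absurd (h K H hK hH ▸ hle (Subgroup.mem_zpowers x)) hx

lemma aux_central {G : Type*} [Group G] [Finite G] (hG : IsPGroup 2 G) (N : Subgroup G) [N.Normal]
    (hN : N ≠ ⊥) : ∃ y ∈ N, y ≠ 1 ∧ y ^ 2 = 1 ∧ ∀ g, g * y = y * g := by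
  have : Fact (Nat.Prime 2) := ⟨Nat.prime_two⟩
  have h1 : 2 ∣ Nat.card N := by
    obtain ⟨n, hn⟩ := (hG.to_subgroup N).exists_card_eq
    rcases n with _ | n
    · exact absurd (Subgroup.eq_bot_of_card_eq N (by simpa using hn)) hN
    · rw [hn, pow_succ]; exact dvd_mul_left _ _
  have hP : IsPGroup 2 (ConjAct G) := hG
  obtain ⟨b, hb, hb1⟩ := hP.exists_fixed_point_of_prime_dvd_card_of_fixed_point N h1
    (a := 1) (by intro g; simp)
  have hbc : ∀ g : G, g * (b : G) = b * g := by
    intro g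
    have := hb (ConjAct.toConjAct g)
    have := congrArg Subtype.val this
    rw [ConjAct.Subgroup.val_conj_smul, ConjAct.smul_def] at this
    simpa [mul_inv_eq_iff_eq_mul] using this
  have hb1' : (b : G) ≠ 1 := fun h => hb1 (Subtype.ext h.symm)
  obtain ⟨m, hm⟩ := IsPGroup.iff_orderOf.1 hG (b : G)
  rcases m with _ | m
  · exact absurd (orderOf_eq_one_iff.1 (by simpa using hm)) hb1'
  · refine ⟨(b : G) ^ 2 ^ m, pow_mem b.2 _, ?_, ?_, ?_⟩
    · intro h
      have := Nat.le_of_dvd (by positivity) (orderOf_dvd_of_pow_eq_one h)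
      rw [hm, pow_succ] at this
      have : 0 < 2 ^ m := by positivity
      omega
    · rw [← pow_mul, ← pow_succ, ← hm, pow_orderOf_eq_one]
    · intro g
      exact (Commute.pow_right (hbc g) _)

lemma aux_central_quot {G : Type*} [Group G] [Finite G] (hG : IsPGroup 2 G) (A C : Subgroup G)
    [A.Normal] [C.Normal] (hC : ¬ C ≤ A) :
    ∃ y ∈ C, y ∉ A ∧ y ^ 2 ∈ A ∧ ∀ g, y⁻¹ * (g * y * g⁻¹) ∈ A := by
  have hN : (C.map (QuotientGroup.mk' A)).Normal :=
    Subgroup.Normal.map inferInstance _ (QuotientGroup.mk'_surjective A)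
  obtain ⟨y, hy, hy1, hy2, hyc⟩ := aux_central (hG.to_quotient A) (C.map (QuotientGroup.mk' A)) (by
    intro h
    rw [Subgroup.map_eq_bot_iff, QuotientGroup.ker_mk'] at h
    exact hC h)
  obtain ⟨x, hx, rfl⟩ := hy
  refine ⟨x, hx, ?_, ?_, ?_⟩
  · intro h
    exact hy1 ((QuotientGroup.eq_one_iff x).2 h)
  · exact (QuotientGroup.eq_one_iff _).1 hy2
  · intro g
    rw [← QuotientGroup.eq_one_iff]
    have := hyc (g : G ⧸ A)
    simp only [QuotientGroup.mk'_apply] at this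
    simp [this]

lemma aux_arith (n : ℕ) (hn : 1 ≤ n) (r s : ℤ) (hr : ¬ (2 : ℤ) ^ n ∣ r + 1)
    (h2 : (2 : ℤ) ^ n ∣ s * (r - 1)) (hs : 2 ∣ s) :
    ∃ j : ℤ, (2 : ℤ) ^ n ∣ j * (1 + r) + s := by
  have hg : ((Int.gcd (1 + r) (2 ^ n) : ℕ) : ℤ) ∣ s := by
    have hd : Int.gcd (1 + r) (2 ^ n) ∣ 2 ^ n := by
      have := Int.gcd_dvd_right (1 + r) (2 ^ n)
      exact_mod_cast this
    obtain ⟨v, hv, hvc⟩ := (Nat.dvd_prime_pow Nat.prime_two).1 hd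
    have hvr : (2 : ℤ) ^ v ∣ 1 + r := by
      have := Int.gcd_dvd_left (1 + r) (2 ^ n)
      rw [hvc] at this
      exact_mod_cast this
    rw [hvc]
    push_cast
    have hvn : v ≠ n := by
      rintro rfl
      exact hr (by rwa [add_comm])
    rcases Nat.lt_or_ge v 2 with h | h
    · interval_cases v
      · simp
      · simpa using hs
    · have h4 : (4 : ℤ) ∣ 1 + r := (pow_dvd_pow 2 h).trans hvr
      obtain ⟨q, hq⟩ : ∃ q, r - 1 = 2 * q := ⟨(r - 1) / 2, by omega⟩
      obtain ⟨m, rfl⟩ : ∃ m, n = m + 1 := ⟨n - 1, by omega⟩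
      have hqo : IsCoprime ((2 : ℤ) ^ m) q := by
        apply IsCoprime.pow_left
        rw [Int.prime_two.coprime_iff_not_dvd]
        omega
      have : (2 : ℤ) ^ m ∣ s * q := by
        rw [hq, pow_succ, show s * (2 * q) = (s * q) * 2 by ring] at h2
        exact Int.dvd_of_mul_dvd_mul_right (by norm_num) h2
      exact (pow_dvd_pow 2 (by omega)).trans (hqo.dvd_of_dvd_mul_right this)
  obtain ⟨t, ht⟩ := hg
  refine ⟨-t * Int.gcdA (1 + r) (2 ^ n), t * Int.gcdB (1 + r) (2 ^ n), ?_⟩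
  have := Int.gcd_eq_gcd_ab (1 + r) (2 ^ n)
  rw [this] at ht
  rw [ht]
  ring

lemma aux_exists_max {G : Type*} [Group G] [Finite G] (hG : IsPGroup 2 G) (z : G) (hz1 : z ≠ 1)
    (hz2 : z ^ 2 = 1) (hu : ∀ x : G, x ^ 2 = 1 → x = 1 ∨ x = z) :
    ∃ a : G, (Subgroup.zpowers a).Normal ∧ z ∈ Subgroup.zpowers a ∧
      ∀ y, y * a = a * y → y ∈ Subgroup.zpowers a := by
  have hzc : ∀ g, g * z * g⁻¹ = z := by
    intro g
    have h : (g * z * g⁻¹) ^ 2 = 1 := by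
      rw [conj_pow, hz2]; simp
    rcases hu _ h with h | h
    · exact absurd (conj_eq_one_iff.1 h) hz1
    · exact h
  let S : Set G := {a | (Subgroup.zpowers a).Normal ∧ z ∈ Subgroup.zpowers a}
  have hzS : z ∈ S := by
    refine ⟨⟨fun n hn g => ?_⟩, Subgroup.mem_zpowers z⟩
    obtain ⟨i, rfl⟩ := hn
    refine ⟨i, ?_⟩
    simp only
    rw [← conj_zpow, hzc]
  obtain ⟨a, haS, hmax⟩ := Set.exists_max_image S orderOf (Set.toFinite S) ⟨z, hzS⟩
  obtain ⟨haN, hza⟩ := haS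
  refine ⟨a, haN, hza, ?_⟩
  by_contra hcon
  push Not at hcon
  obtain ⟨y0, hy0c, hy0⟩ := hcon
  have hCN : (Subgroup.centralizer (Subgroup.zpowers a : Set G)).Normal := inferInstance
  obtain ⟨y, hyC, hyA, hy2, hyg⟩ := aux_central_quot hG (Subgroup.zpowers a)
    (Subgroup.centralizer (Subgroup.zpowers a : Set G)) (by
      intro h
      apply hy0
      apply h
      rw [Subgroup.mem_centralizer_iff]
      rintro _ ⟨i, rfl⟩
      exact (Commute.zpow_left (show Commute a y0 from hy0c.symm) i))
  have hya : Commute a y := (Subgroup.mem_centralizer_iff.1 hyC) a (Subgroup.mem_zpowers a)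
  obtain ⟨s, hs⟩ := hy2
  simp only at hs
  rcases Int.even_or_odd s with ⟨t, ht⟩ | hodd
  · have h1 : (a ^ (-t) * y) ^ 2 = 1 := by
      rw [(hya.zpow_left (-t)).mul_pow, ← hs, ← zpow_natCast, ← zpow_mul, ← zpow_add, ht]
      have : -t * ((2 : ℕ) : ℤ) + (t + t) = 0 := by push_cast; ring
      rw [this, zpow_zero]
    have h2 : a ^ (-t) * y ∈ Subgroup.zpowers a := by
      rcases hu _ h1 with h | h
      · rw [h]; exact one_mem _
      · rw [h]; exact hza
    exact hyA ((Subgroup.mul_mem_cancel_left _ (Subgroup.zpow_mem_zpowers a (-t))).1 h2)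
  · have hay : a ∈ Subgroup.zpowers y := by
      obtain ⟨m, hm⟩ := IsPGroup.iff_orderOf.1 hG a
      have hco : IsCoprime s ((2 : ℤ) ^ m) := by
        apply IsCoprime.pow_right
        rw [isCoprime_comm, Int.prime_two.coprime_iff_not_dvd]
        rw [← even_iff_two_dvd]
        simpa using hodd
      obtain ⟨u, v, huv⟩ := hco
      have h1 : a ^ (u * s + v * 2 ^ m) = a := by rw [huv, zpow_one]
      have h2 : a ^ ((2 : ℤ) ^ m) = 1 := by
        have := pow_orderOf_eq_one a
        rw [hm] at this
        exact_mod_cast this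
      rw [zpow_add, mul_comm u s, mul_comm v, zpow_mul, zpow_mul, h2, one_zpow, mul_one, hs] at h1
      rw [← h1]
      exact zpow_mem (pow_mem (Subgroup.mem_zpowers y) _) _
    have hle : Subgroup.zpowers a ≤ Subgroup.zpowers y := by simpa using hay
    have hyN : (Subgroup.zpowers y).Normal := by
      refine ⟨fun n hn g => ?_⟩
      obtain ⟨i, rfl⟩ := hn
      simp only
      rw [← conj_zpow]
      apply zpow_mem
      have := mul_mem (Subgroup.mem_zpowers y) (hle (hyg g))
      simpa using this
    have h3 := hmax y ⟨hyN, hle hza⟩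
    rw [← Nat.card_zpowers, ← Nat.card_zpowers] at h3
    have := Subgroup.eq_of_le_of_card_ge hle h3
    exact hyA (this ▸ Subgroup.mem_zpowers y)

lemma aux_quat {G : Type*} [Group G] [Finite G] (N : ℕ) [NeZero N] (a y : G)
    (hcard : Nat.card G = 4 * N) (ha : a ^ (2 * N) = 1) (hy2 : y ^ 2 = a ^ N)
    (hya : y * a * y⁻¹ = a⁻¹)
    (hall : ∀ g, g ∈ Subgroup.zpowers a ∨ g * y⁻¹ ∈ Subgroup.zpowers a) :
    Nonempty (G ≃* QuaternionGroup N) := by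
  let φ : ZMod (2 * N) →+ Additive G :=
    ZMod.lift (2 * N) ⟨zmultiplesHom (Additive G) (Additive.ofMul a), by
      change a ^ ((2 * N : ℕ) : ℤ) = 1
      rw [zpow_natCast, ha]⟩
  let e : ZMod (2 * N) → G := fun i => (φ i).toMul
  have he : ∀ k : ℤ, e k = a ^ k := by
    intro k
    simp only [e, φ, ZMod.lift_coe]
    rfl
  have hyz : ∀ k : ℤ, y * a ^ k = a ^ (-k) * y := by
    intro k
    have : y * a ^ k * y⁻¹ = a ^ (-k) := by rw [← conj_zpow, hya, inv_zpow, zpow_neg]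
    rw [← this]; group
  let f : QuaternionGroup N →* G :=
    MonoidHom.mk' (fun q => match q with
      | .a i => e i
      | .xa i => y * e i) (by
      rintro (i | i) (j | j) <;>
      obtain ⟨i, rfl⟩ := ZMod.intCast_surjective i <;>
      obtain ⟨j, rfl⟩ := ZMod.intCast_surjective j
      · simp only [QuaternionGroup.a_mul_a]
        rw [← Int.cast_add, he, he, he, zpow_add]
      · simp only [QuaternionGroup.a_mul_xa]
        rw [← Int.cast_sub, he, he, he, hyz, ← mul_assoc, mul_assoc _ y, hyz, ← mul_assoc,
          ← zpow_add]
        congr 2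
        ring
      · simp only [QuaternionGroup.xa_mul_a]
        rw [← Int.cast_add, he, he, he, zpow_add, mul_assoc]
      · simp only [QuaternionGroup.xa_mul_xa]
        have : ((N : ZMod (2 * N)) + (j : ZMod (2 * N)) - (i : ZMod (2 * N))) =
          (((N : ℤ) + j - i : ℤ) : ZMod (2 * N)) := by push_cast; rfl
        rw [this, he, he, he, hyz, mul_assoc, ← mul_assoc y y, ← pow_two, hy2, ← zpow_natCast,
          ← zpow_add, ← zpow_add]
        congr 1
        ring)
  have hsurj : Function.Surjective f := by
    intro g
    rcases hall g with ⟨k, hk⟩ | ⟨k, hk⟩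
    · exact ⟨.a (k : ZMod (2 * N)), by change e k = g; rw [he]; exact hk⟩
    · refine ⟨.xa ((-k : ℤ) : ZMod (2 * N)), ?_⟩
      change y * e _ = g
      simp only at hk
      rw [he, hyz, neg_neg, hk]
      group
  have hbij : Function.Bijective f := by
    have := Fintype.ofFinite G
    rw [Fintype.bijective_iff_surjective_and_card]
    refine ⟨hsurj, ?_⟩
    rw [QuaternionGroup.card, ← hcard, Nat.card_eq_fintype_card]
  exact ⟨(MulEquiv.ofBijective f hbij).symm⟩

lemma aux_unique_invol {G : Type*} [Group G] [Finite G] (lam : ℕ) (hlam : 2 ≤ lam)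
    (hcard : Nat.card G = 2 ^ lam) (hnc : ¬ IsCyclic G) (z : G) (hz1 : z ≠ 1)
    (hz2 : z ^ 2 = 1) (hu : ∀ x : G, x ^ 2 = 1 → x = 1 ∨ x = z) :
    Nonempty (G ≃* QuaternionGroup (2 ^ (lam - 2))) := by
  have : Fact (Nat.Prime 2) := ⟨Nat.prime_two⟩
  have hG : IsPGroup 2 G := IsPGroup.of_card hcard
  obtain ⟨a, haN, hza, hcen⟩ := aux_exists_max hG z hz1 hz2 hu
  obtain ⟨n, hn⟩ := IsPGroup.iff_orderOf.1 hG a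
  have hpow : ∀ k : ℤ, a ^ k = 1 ↔ (2 : ℤ) ^ n ∣ k := by
    intro k
    rw [← orderOf_dvd_iff_zpow_eq_one, hn]
    push_cast
    rfl
  have hsq : ∀ x : G, x ^ 2 = 1 → x ∈ Subgroup.zpowers a := by
    intro x hx
    rcases hu x hx with h | h
    · rw [h]; exact one_mem _
    · rw [h]; exact hza
  -- not everything lies in the cyclic subgroup
  have hex : ∃ y, y ∉ Subgroup.zpowers a := by
    by_contra h
    push Not at h
    exact hnc ⟨a, h⟩
  have hconj : ∀ y, ∃ r : ℤ, y * a * y⁻¹ = a ^ r := by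
    intro y
    obtain ⟨r, hr⟩ := haN.conj_mem a (Subgroup.mem_zpowers a) y
    exact ⟨r, hr.symm⟩
  have hn2 : 2 ≤ n := by
    by_contra hlt
    have ha2 : a ^ 2 = 1 := by
      have := (hpow 2).2 (by interval_cases n <;> norm_num)
      exact_mod_cast this
    obtain ⟨y, hy⟩ := hex
    apply hy
    apply hcen
    have h : (y * a * y⁻¹) ^ 2 = 1 := by rw [conj_pow, ha2]; simp
    have hyz : y * a * y⁻¹ = a := by
      rcases hu a ha2 with h1 | h1
      · rw [h1]; simp
      · rcases hu _ h with h | h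
        · rw [conj_eq_one_iff.1 h]; simp
        · rw [h, h1]
    exact mul_inv_eq_iff_eq_mul.1 hyz
  have hinv : ∀ y, y ∉ Subgroup.zpowers a → y ^ 2 ∈ Subgroup.zpowers a → y * a * y⁻¹ = a⁻¹ := by
    intro y hy hy2
    obtain ⟨r, hr⟩ := hconj y
    obtain ⟨s, hs⟩ := hy2
    simp only at hs
    by_contra hne
    have hr1 : ¬ (2 : ℤ) ^ n ∣ r + 1 := by
      rw [← hpow, zpow_add, zpow_one, ← hr]
      intro h
      exact hne (eq_inv_of_mul_eq_one_left h)
    have hyk : ∀ k : ℤ, y * a ^ k * y⁻¹ = a ^ (r * k) := by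
      intro k
      rw [← conj_zpow, hr, zpow_mul]
    have hs1 : (2 : ℤ) ^ n ∣ s * (r - 1) := by
      rw [← hpow, show s * (r - 1) = r * s - s by ring, zpow_sub, ← hyk, hs]
      group
    have hs2 : (2 : ℤ) ∣ s := by
      by_contra hodd
      apply hy
      apply hcen
      have hco : IsCoprime s ((2 : ℤ) ^ n) := by
        apply IsCoprime.pow_right
        rwa [isCoprime_comm, Int.prime_two.coprime_iff_not_dvd]
      have h5 : (2 : ℤ) ^ n ∣ r - 1 := hco.symm.dvd_of_dvd_mul_left hs1
      rw [← hpow, zpow_sub, zpow_one, ← hr, mul_inv_eq_one] at h5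
      exact mul_inv_eq_iff_eq_mul.1 h5
    obtain ⟨j, hj⟩ := aux_arith n (by omega) r s hr1 hs1 hs2
    have h6 : (a ^ j * y) ^ 2 = 1 := by
      have : (a ^ j * y) ^ 2 = a ^ j * (y * a ^ j * y⁻¹) * y ^ 2 := by
        rw [pow_two, pow_two]; group
      rw [this, hyk, ← hs, ← zpow_add, ← zpow_add, hpow]
      convert hj using 1
      ring
    exact hy ((Subgroup.mul_mem_cancel_left _ (Subgroup.zpow_mem_zpowers a j)).1 (hsq _ h6))
  have h4 : ∀ h, h ^ 2 ∉ Subgroup.zpowers a → (h ^ 2) ^ 2 ∉ Subgroup.zpowers a := by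
    intro h hh hh2
    have h1 := hinv _ hh hh2
    obtain ⟨r, hr⟩ := hconj h
    have h3 : h ^ 2 * a * (h ^ 2)⁻¹ = a ^ (r * r) := by
      have : h ^ 2 * a * (h ^ 2)⁻¹ = h * (h * a * h⁻¹) * h⁻¹ := by rw [pow_two]; group
      rw [this, hr, ← conj_zpow, hr, zpow_mul]
    rw [h3] at h1
    have h5 : a ^ (r * r + 1) = 1 := by rw [zpow_add, h1]; simp
    rw [hpow] at h5
    have h6 : (4 : ℤ) ∣ r * r + 1 := (pow_dvd_pow 2 hn2).trans h5
    rcases Int.even_or_odd' r with ⟨q, rfl | rfl⟩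
    · ring_nf at h6; omega
    · ring_nf at h6; omega
  have hall2 : ∀ y, y ^ 2 ∈ Subgroup.zpowers a := by
    intro y
    by_contra hy
    have hind : ∀ j : ℕ, (y ^ 2 ^ j) ^ 2 ∉ Subgroup.zpowers a := by
      intro j
      induction j with
      | zero => simpa using hy
      | succ j ih =>
        have := h4 _ ih
        rwa [← pow_mul y, ← pow_succ] at this
    apply hind lam
    rw [← hcard, pow_card_eq_one']
    simp
  obtain ⟨y, hy⟩ := hex
  have hyi := hinv y hy (hall2 y)
  have hall : ∀ g, g ∈ Subgroup.zpowers a ∨ g * y⁻¹ ∈ Subgroup.zpowers a := by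
    intro g
    by_cases hg : g ∈ Subgroup.zpowers a
    · exact Or.inl hg
    · right
      have hgi := hinv g hg (hall2 g)
      apply hcen
      have h1 : y⁻¹ * a * y = a⁻¹ := by
        have : a = y⁻¹ * (y * a * y⁻¹) * y := by group
        rw [hyi] at this
        have h2 := congrArg (·⁻¹) this
        simp only [mul_inv_rev, inv_inv] at h2
        rw [h2]; group
      have h3 : (g * y⁻¹) * a * (g * y⁻¹)⁻¹ = a := by
        have : (g * y⁻¹) * a * (g * y⁻¹)⁻¹ = g * (y⁻¹ * a * y) * g⁻¹ := by group
        rw [this, h1, ← conj_inv, hgi, inv_inv]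
      exact mul_inv_eq_iff_eq_mul.1 h3
  -- index two
  have hidx : (Subgroup.zpowers a).index = 2 := by
    rw [Subgroup.index_eq_two_iff_exists_notMem_and]
    exact ⟨y⁻¹, by simpa using hy, fun b => (hall b).symm⟩
  have hao : 2 ^ n * 2 = 2 ^ lam := by
    have := (Subgroup.zpowers a).card_mul_index
    rwa [hidx, Nat.card_zpowers, hn, hcard] at this
  have hnl : n + 1 = lam := by
    rw [← pow_succ] at hao
    exact Nat.pow_right_injective (le_refl 2) hao
  have hN : 2 ^ n = 2 * 2 ^ (lam - 2) := by
    rw [← pow_succ']; congr 1; omega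
  -- the square of `y`
  have hy1 : y ^ 2 ≠ 1 := fun h => hy (hsq y h)
  have hy4 : (y ^ 2) ^ 2 = 1 := by
    obtain ⟨s, hs⟩ := hall2 y
    simp only at hs
    have h1 : y * y ^ 2 * y⁻¹ = (y ^ 2)⁻¹ := by
      rw [← hs, ← conj_zpow, hyi, inv_zpow]
    have h2 : y * y ^ 2 * y⁻¹ = y ^ 2 := by group
    rw [h2] at h1
    rw [pow_two (y ^ 2)]
    nth_rewrite 1 [h1]
    simp
  have hyz : y ^ 2 = z := (hu _ hy4).resolve_left hy1
  have haz : a ^ (2 ^ (lam - 2)) = z := by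
    refine (hu _ ?_).resolve_left ?_
    · rw [← pow_mul, mul_comm, ← hN, ← hn, pow_orderOf_eq_one]
    · intro h
      have := Nat.le_of_dvd (by positivity) (orderOf_dvd_of_pow_eq_one h)
      rw [hn, hN] at this
      have : 0 < 2 ^ (lam - 2) := by positivity
      omega
  refine aux_quat (2 ^ (lam - 2)) a y ?_ ?_ (by rw [hyz, haz]) hyi hall
  · rw [hcard, ← hao, hN]; ring
  · rw [← hN, ← hn, pow_orderOf_eq_one]

theorem noncyclic_nonquaternion_two_group_three_subgroups
    (lam : ℕ) (hlam : 2 ≤ lam)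
    (G : Type*) [Group G] (hcard : Nat.card G = 2 ^ lam)
    (hnc : ¬ IsCyclic G)
    (hnq : ¬ Nonempty (G ≃* QuaternionGroup (2 ^ (lam - 2)))) :
    ∀ k, 1 ≤ k → k ≤ lam - 1 →
      3 ≤ Nat.card {H : Subgroup G // Nat.card H = 2 ^ k} := by
  intro k hk1 hk2
  have : Finite G := Nat.finite_of_card_ne_zero (by rw [hcard]; positivity)
  have : Fact (Nat.Prime 2) := ⟨Nat.prime_two⟩
  have hG : IsPGroup 2 G := IsPGroup.of_card hcard
  by_contra hlt
  have hLcyc : ∀ L : Subgroup G, Nat.card L = 2 ^ (k + 1) → IsCyclic L := by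
    intro L hL
    refine (aux_cyclic_or hL).resolve_right fun h3 => hlt (h3.trans ?_)
    refine Nat.card_le_card_of_injective
      (fun K : {K : Subgroup L // Nat.card K = 2 ^ k} =>
        (⟨K.1.map L.subtype, by
          rw [Subgroup.card_map_of_injective L.subtype_injective, K.2]⟩ :
          {H : Subgroup G // Nat.card H = 2 ^ k})) ?_
    intro K K' h
    exact Subtype.ext (Subgroup.map_injective L.subtype_injective (congrArg Subtype.val h))
  have hcov : ∀ x : G, x ^ 2 = 1 → x ≠ 1 → ∃ H : Subgroup G, Nat.card H = 2 ^ k ∧ x ∈ H := by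
    intro x hx hx1
    have ho : orderOf x = 2 := orderOf_eq_prime hx hx1
    obtain ⟨H, hH, hle⟩ := Sylow.exists_subgroup_card_pow_prime_le (G := G) 2 (n := 1) (m := k)
      (by rw [hcard]; exact pow_dvd_pow _ (by omega)) (Subgroup.zpowers x)
      (by rw [Nat.card_zpowers, ho, pow_one]) hk1
    exact ⟨H, hH, hle (Subgroup.mem_zpowers x)⟩
  have huniq : ∀ H : Subgroup G, Nat.card H = 2 ^ k → ∀ u ∈ H, ∀ v ∈ H, u ^ 2 = 1 → v ^ 2 = 1 →
      u ≠ 1 → v ≠ 1 → u = v := by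
    intro H hH u hu v hv hu2 hv2 hu1 hv1
    obtain ⟨L, hL, hle⟩ := Sylow.exists_subgroup_card_pow_succ (G := G) (p := 2) (n := k)
      (by rw [hcard]; exact pow_dvd_pow _ (by omega)) hH
    have := hLcyc L hL
    have := aux_cyc_invol (⟨u, hle hu⟩ : L) ⟨v, hle hv⟩ (Subtype.ext hu2) (Subtype.ext hv2)
      (fun h => hu1 (congrArg Subtype.val h)) (fun h => hv1 (congrArg Subtype.val h))
    exact congrArg Subtype.val this
  obtain ⟨z, -, hz1, hz2, hzc⟩ := aux_central hG (⊤ : Subgroup G) (by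
    intro h
    have h1 : Nat.card (⊤ : Subgroup G) = 1 := by rw [h]; simp
    rw [Subgroup.card_top, hcard] at h1
    have := Nat.one_lt_two_pow (n := lam) (by omega)
    omega)
  refine hnq (aux_unique_invol lam hlam hcard hnc z hz1 hz2 ?_)
  intro t ht2
  by_contra hcon
  push Not at hcon
  obtain ⟨ht1, htz⟩ := hcon
  have hzt2 : (t * z) ^ 2 = 1 := by
    rw [(show Commute t z from hzc t).mul_pow, ht2, hz2, one_mul]
  have hzt1 : t * z ≠ 1 := by
    intro h
    apply htz
    rw [eq_inv_of_mul_eq_one_left h]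
    exact inv_eq_of_mul_eq_one_left (by rw [← pow_two, hz2])
  obtain ⟨H1, h1, m1⟩ := hcov z hz2 hz1
  obtain ⟨H2, h2, m2⟩ := hcov t ht2 ht1
  obtain ⟨H3, h3, m3⟩ := hcov _ hzt2 hzt1
  apply hlt
  refine aux_three_le (⟨H1, h1⟩ : {H : Subgroup G // Nat.card H = 2 ^ k}) ⟨H2, h2⟩ ⟨H3, h3⟩ ?_ ?_ ?_
  · intro h
    obtain rfl := congrArg Subtype.val h
    exact htz (huniq _ h1 t m2 z m1 ht2 hz2 ht1 hz1)
  · intro h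
    obtain rfl := congrArg Subtype.val h
    have := huniq _ h1 _ m3 z m1 hzt2 hz2 hzt1 hz1
    exact ht1 (by simpa using this)
  · intro h
    obtain rfl := congrArg Subtype.val h
    have := huniq _ h2 _ m3 t m2 hzt2 ht2 hzt1 ht1
    exact hz1 (by simpa using this)
end

section
/- If G is a group of order 2^λ with λ ≥ 5 not isomorphic to C_{2^λ}, to C_{2^{λ−1}} × C₂, or to the modular group M_{2^λ}, then G has strictly more than 3λ − 1 subgroups. -/
lemma aux_card_coatom {n : ℕ} {G : Type*} [Group G] (hc : Nat.card G = 2 ^ (n + 1))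
    {M : Subgroup G} (hM : IsCoatom M) : Nat.card M = 2 ^ n := by
  have : Finite G := Nat.finite_of_card_ne_zero (by rw [hc]; positivity)
  have : Fact (Nat.Prime 2) := ⟨Nat.prime_two⟩
  have h1 : Nat.card M ∣ 2 ^ (n + 1) := hc ▸ M.card_subgroup_dvd_card
  obtain ⟨k, hk, hk2⟩ := (Nat.dvd_prime_pow Nat.prime_two).1 h1
  have hne : k ≠ n + 1 := by
    rintro rfl
    exact hM.1 (Subgroup.eq_top_of_card_eq M (by rw [hk2, hc]))
  obtain ⟨K, hK1, hK2⟩ := Sylow.exists_subgroup_card_pow_succ (G := G) (p := 2) (n := k)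
    (by rw [hc]; exact pow_dvd_pow _ (by omega)) hk2
  rcases hM.le_iff.1 hK2 with h | h
  · subst h
    rw [← Subgroup.card_top (G := G), hK1] at hc
    have := Nat.pow_right_injective le_rfl hc
    have : k = n := by omega
    rw [hk2, this]
  · subst h
    rw [hK1] at hk2
    have := Nat.pow_right_injective le_rfl hk2
    omega

lemma aux_index_s19 {n : ℕ} {G : Type*} [Group G] (hc : Nat.card G = 2 ^ (n + 1))
    {M : Subgroup G} (hM : Nat.card M = 2 ^ n) : M.index = 2 := by
  have := M.card_mul_index
  rw [hc, hM, pow_succ] at this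
  exact Nat.eq_of_mul_eq_mul_left (by positivity) this

lemma aux_coatom {n : ℕ} {G : Type*} [Group G] (hc : Nat.card G = 2 ^ (n + 1))
    {M : Subgroup G} (hM : Nat.card M = 2 ^ n) : IsCoatom M := by
  have : Finite G := Nat.finite_of_card_ne_zero (by rw [hc]; positivity)
  constructor
  · rintro rfl
    rw [Subgroup.card_top, hc] at hM
    have := Nat.pow_right_injective le_rfl hM
    omega
  · intro K hK
    have h1 : Nat.card K ∣ 2 ^ (n + 1) := hc ▸ K.card_subgroup_dvd_card
    obtain ⟨k, hk, hk2⟩ := (Nat.dvd_prime_pow Nat.prime_two).1 h1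
    have h2 : k ≤ n + 1 := hk
    rcases Nat.lt_or_ge k (n + 1) with h | h
    · exfalso
      apply hK.ne
      apply Subgroup.eq_of_le_of_card_ge hK.le
      rw [hM, hk2]
      exact Nat.pow_le_pow_right (by norm_num) (by omega)
    · apply Subgroup.eq_top_of_card_eq
      rw [hk2, hc, le_antisymm h2 h]

lemma aux_mem_coatom {G : Type*} [Group G] [Finite G] (hnc : ¬ IsCyclic G) (g : G) :
    ∃ M : Subgroup G, IsCoatom M ∧ g ∈ M := by
  rcases eq_top_or_exists_le_coatom (Subgroup.zpowers g) with h | ⟨M, hM, h⟩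
  · exact absurd (isCyclic_iff_exists_zpowers_eq_top.2 ⟨g, h⟩) hnc
  · exact ⟨M, hM, h (Subgroup.mem_zpowers g)⟩

lemma aux_three {G : Type*} [Group G] [Finite G] (hnc : ¬ IsCyclic G) {M : Subgroup G}
    (hM : IsCoatom M) : ∃ M₂ M₃ : Subgroup G, IsCoatom M₂ ∧ IsCoatom M₃ ∧
      M₂ ≠ M ∧ M₃ ≠ M ∧ M₂ ≠ M₃ := by
  obtain ⟨g, hg⟩ : ∃ g, g ∉ M := by
    by_contra! h
    exact hM.1 ((Subgroup.eq_top_iff' M).2 h)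
  obtain ⟨M₂, h2, hg2⟩ := aux_mem_coatom hnc g
  have hne : M₂ ≠ M := by rintro rfl; exact hg hg2
  obtain ⟨h, hh, hh2⟩ : ∃ h ∈ M, h ∉ M₂ := by
    by_contra! hcon
    have : M ≤ M₂ := hcon
    rcases hM.le_iff.1 this with h | h
    · exact h2.1 h
    · exact hne h
  obtain ⟨M₃, h3, hg3⟩ := aux_mem_coatom hnc (h * g)
  refine ⟨M₂, M₃, h2, h3, hne, ?_, ?_⟩
  · rintro rfl
    exact hg ((Subgroup.mul_mem_cancel_left _ hh).1 hg3)
  · rintro rfl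
    exact hh2 ((Subgroup.mul_mem_cancel_right _ hg2).1 hg3)

lemma aux_count {G : Type*} [Group G] [Finite G] (M : Subgroup G) (S : Finset (Subgroup G))
    (hS : ∀ H ∈ S, ¬ H ≤ M) : Nat.card (Subgroup M) + S.card ≤ Nat.card (Subgroup G) := by
  classical
  have := Fintype.ofFinite (Subgroup G)
  have h1 : Nat.card (Subgroup M) = (Finset.univ.filter (fun H : Subgroup G => H ≤ M)).card := by
    rw [Nat.card_congr (Subgroup.MapSubtype.orderIso M).toEquiv, Nat.card_eq_fintype_card,
      Fintype.card_subtype]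
  rw [h1, ← Finset.card_union_of_disjoint, Nat.card_eq_fintype_card]
  · exact Finset.card_le_univ _
  · rw [Finset.disjoint_left]
    intro H hH hH2
    exact hS H hH2 (Finset.mem_filter.1 hH).2

lemma aux_not_le {G : Type*} [Group G] {M N : Subgroup G} (hM : IsCoatom M) (hN : IsCoatom N)
    (h : N ≠ M) : ¬ N ≤ M := by
  intro hle
  rcases hN.le_iff.1 hle with h' | h'
  · exact hM.1 h'
  · exact h h'.symm

lemma aux_three_count {G : Type*} [Group G] [Finite G] (hnc : ¬ IsCyclic G) {M : Subgroup G}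
    (hM : IsCoatom M) : Nat.card (Subgroup M) + 3 ≤ Nat.card (Subgroup G) := by
  classical
  obtain ⟨M₂, M₃, h2, h3, h2M, h3M, h23⟩ := aux_three hnc hM
  have := aux_count M {⊤, M₂, M₃} (by
    intro H hH
    simp only [Finset.mem_insert, Finset.mem_singleton] at hH
    rcases hH with rfl | rfl | rfl
    · rw [top_le_iff]; exact hM.1
    · exact aux_not_le hM h2 h2M
    · exact aux_not_le hM h3 h3M)
  rwa [Finset.card_eq_three.2 ⟨⊤, M₂, M₃, h2.1.symm, h3.1.symm, h23, rfl⟩] at this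

lemma aux_big_count {n k : ℕ} {G : Type*} [Group G] (hc : Nat.card G = 2 ^ (n + 1))
    (hnc : ¬ IsCyclic G) {M : Subgroup G} (hM : IsCoatom M) (hk : k + 1 < n)
    (hx : ∀ x, x ∉ M → x ^ (2 ^ (k + 1)) = 1) :
    Nat.card (Subgroup M) + 2 ^ (n - k) + 3 ≤ Nat.card (Subgroup G) := by
  classical
  have : Finite G := Nat.finite_of_card_ne_zero (by rw [hc]; positivity)
  have := Fintype.ofFinite G
  obtain ⟨M₂, M₃, h2, h3, h2M, h3M, h23⟩ := aux_three hnc hM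
  have hMc := aux_card_coatom hc hM
  have hMi := aux_index_s19 hc hMc
  set O : Finset G := Finset.univ.filter (fun x => x ∉ M) with hO
  have hOc : O.card = 2 ^ n := by
    have h1 : (Finset.univ.filter (fun x => x ∈ M)).card = 2 ^ n := by
      rw [← hMc, Nat.card_eq_fintype_card, Fintype.card_subtype]
    have h2 := Finset.card_filter_add_card_filter_not (s := (Finset.univ : Finset G)) (fun x => x ∈ M)
    rw [Finset.card_univ, ← Nat.card_eq_fintype_card, hc, h1, pow_succ] at h2
    rw [hO]
    omega
  set S := O.image (fun x => Subgroup.zpowers x) with hS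
  have hSc : O.card ≤ 2 ^ k * S.card := by
    apply Finset.card_le_mul_card_image
    intro H hH
    obtain ⟨x, hxO, rfl⟩ := Finset.mem_image.1 hH
    have hxM : x ∉ M := (Finset.mem_filter.1 hxO).2
    have hsub : O.filter (fun y => Subgroup.zpowers y = Subgroup.zpowers x) ⊆
        (Finset.range (2 ^ k)).image (fun j => x ^ (2 * j + 1)) := by
      intro y hy
      obtain ⟨hy1, hy2⟩ := Finset.mem_filter.1 hy
      have hyM : y ∉ M := (Finset.mem_filter.1 hy1).2
      have hyx : y ∈ Subgroup.zpowers x := hy2 ▸ Subgroup.mem_zpowers y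
      obtain ⟨i, hi⟩ := (mem_powers_iff_mem_zpowers.2 hyx)
      have hi : x ^ i = y := hi
      have hi2 : x ^ (i % 2 ^ (k + 1)) = y := by
        rw [← hi]
        conv_rhs => rw [← Nat.mod_add_div i (2 ^ (k + 1)), pow_add, pow_mul, hx x hxM, one_pow, mul_one]
      have hlt : i % 2 ^ (k + 1) < 2 ^ (k + 1) := Nat.mod_lt _ (by positivity)
      generalize i % 2 ^ (k + 1) = t at hi2 hlt
      rcases Nat.even_or_odd' t with ⟨j, rfl | rfl⟩
      · exfalso
        apply hyM
        rw [← hi2, pow_mul]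
        exact M.pow_mem (Subgroup.sq_mem_of_index_two hMi x) _
      · refine Finset.mem_image.2 ⟨j, Finset.mem_range.2 ?_, hi2⟩
        rw [pow_succ] at hlt
        omega
    calc _ ≤ _ := Finset.card_le_card hsub
      _ ≤ _ := Finset.card_image_le
      _ = _ := Finset.card_range _
  have hSc2 : 2 ^ (n - k) ≤ S.card := by
    rw [hOc] at hSc
    have : 2 ^ n = 2 ^ k * 2 ^ (n - k) := by rw [← pow_add]; congr 1; omega
    rw [this] at hSc
    exact Nat.le_of_mul_le_mul_left hSc (by positivity)
  have hSsmall : ∀ H ∈ S, Nat.card H < 2 ^ n := by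
    intro H hH
    obtain ⟨x, hxO, rfl⟩ := Finset.mem_image.1 hH
    have hxM : x ∉ M := (Finset.mem_filter.1 hxO).2
    rw [Nat.card_zpowers]
    calc _ ≤ 2 ^ (k + 1) := orderOf_le_of_pow_eq_one (by positivity) (hx x hxM)
      _ < 2 ^ n := Nat.pow_lt_pow_right (by norm_num) hk
  have key := aux_count M (S ∪ {⊤, M₂, M₃}) (by
    intro H hH
    simp only [Finset.mem_union, Finset.mem_insert, Finset.mem_singleton] at hH
    rcases hH with hH | rfl | rfl | rfl
    · obtain ⟨x, hxO, rfl⟩ := Finset.mem_image.1 hH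
      have hxM : x ∉ M := (Finset.mem_filter.1 hxO).2
      intro h
      exact hxM (h (Subgroup.mem_zpowers x))
    · rw [top_le_iff]; exact hM.1
    · exact aux_not_le hM h2 h2M
    · exact aux_not_le hM h3 h3M)
  rw [Finset.card_union_of_disjoint,
    Finset.card_eq_three.2 ⟨⊤, M₂, M₃, h2.1.symm, h3.1.symm, h23, rfl⟩] at key
  · omega
  · rw [Finset.disjoint_left]
    intro H hH hH2
    have hlt := hSsmall H hH
    simp only [Finset.mem_insert, Finset.mem_singleton] at hH2
    rcases hH2 with rfl | rfl | rfl
    · rw [Subgroup.card_top, hc, pow_succ] at hlt; omega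
    · rw [aux_card_coatom hc h2] at hlt; omega
    · rw [aux_card_coatom hc h3] at hlt; omega

lemma aux_cyclic_count {n : ℕ} {G : Type*} [Group G] (a : G) (ha : orderOf a = 2 ^ n) :
    n + 1 ≤ Nat.card (Subgroup (Subgroup.zpowers a)) := by
  have hfo : 0 < orderOf a := by rw [ha]; positivity
  have : Finite (Subgroup.zpowers a) := Nat.finite_of_card_ne_zero (by rw [Nat.card_zpowers]; omega)
  let a' : Subgroup.zpowers a := ⟨a, Subgroup.mem_zpowers a⟩
  have ha' : orderOf a' = 2 ^ n := by rw [← ha]; exact Subgroup.orderOf_mk a _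
  let f : Fin (n + 1) → Subgroup (Subgroup.zpowers a) := fun i => Subgroup.zpowers (a' ^ (2 ^ (i : ℕ)))
  have hf : Function.Injective f := by
    intro i j hij
    have h : ∀ i : Fin (n+1), Nat.card (f i) = 2 ^ (n - i) := by
      intro i
      rw [Nat.card_zpowers, orderOf_pow_of_dvd (by positivity), ha']
      · exact Nat.pow_div (by omega) (by norm_num)
      · rw [ha']; exact pow_dvd_pow _ (by omega)
    have h1 := h i
    rw [hij, h j] at h1
    have := Nat.pow_right_injective le_rfl h1
    ext
    omega
  simpa using Nat.card_le_card_of_injective f hf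

lemma aux_cop (m : ℕ) {x : ℤ} (hx : Odd x) : IsCoprime ((2 : ℤ) ^ m) x := by
  apply IsCoprime.pow_left
  obtain ⟨s, rfl⟩ := hx
  exact ⟨-s, 1, by ring⟩

lemma aux_sq {n : ℕ} {r : ℤ} (hn : 3 ≤ n) (h : (2 : ℤ) ^ n ∣ r * r - 1) :
    ((2 : ℤ) ^ (n - 1) ∣ r - 1) ∨ ((2 : ℤ) ^ (n - 1) ∣ r + 1) := by
  obtain ⟨m, rfl⟩ : ∃ m, n = m + 1 := ⟨n - 1, by omega⟩
  simp only [Nat.add_sub_cancel]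
  have h4 : (4 : ℤ) ∣ r * r - 1 := dvd_trans (by
    have : (4 : ℤ) = 2 ^ 2 := by norm_num
    rw [this]; exact pow_dvd_pow _ (by omega)) h
  have hodd : Odd r := by
    rcases Int.even_or_odd' r with ⟨t, rfl | rfl⟩
    · exfalso
      obtain ⟨c, hc⟩ := h4
      have : 4 * (t * t) - 1 = 4 * c := by linarith
      omega
    · exact ⟨t, rfl⟩
  obtain ⟨t, rfl⟩ := hodd
  have h' : (2 : ℤ) ^ m ∣ (2 * t) * (t + 1) := by
    have e : (2 * t + 1) * (2 * t + 1) - 1 = 2 * ((2 * t) * (t + 1)) := by ring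
    rw [e, pow_succ, mul_comm] at h
    exact Int.dvd_of_mul_dvd_mul_left (by norm_num) h
  have e1 : 2 * t + 1 - 1 = 2 * t := by ring
  have e2 : 2 * t + 1 + 1 = 2 * (t + 1) := by ring
  rw [e1, e2]
  rcases Int.even_or_odd t with ht | ht
  · left
    exact (aux_cop m ht.add_one).dvd_of_dvd_mul_right h'
  · right
    have e : 2 * t * (t + 1) = 2 * (t + 1) * t := by ring
    rw [e] at h'
    exact (aux_cop m ht).dvd_of_dvd_mul_right h'

lemma aux_tri {n : ℕ} (hn : 3 ≤ n) {G : Type*} [Group G] (hc : Nat.card G = 2 ^ (n + 1))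
    (hnc : ¬ IsCyclic G) {a : G} (ha : orderOf a = 2 ^ n) :
    (∃ b, b ∉ Subgroup.zpowers a ∧ b ^ 2 = 1 ∧
      (b⁻¹ * a * b = a ∨ b⁻¹ * a * b = a ^ (1 + 2 ^ (n - 1)))) ∨
    (∀ x, x ∉ Subgroup.zpowers a → x ^ 4 = 1) := by
  have : Finite G := Nat.finite_of_card_ne_zero (by rw [hc]; positivity)
  have hone : ∀ z : ℤ, a ^ z = 1 ↔ (2 : ℤ) ^ n ∣ z := by
    intro z
    rw [← orderOf_dvd_iff_zpow_eq_one, ha]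
    push_cast
    rfl
  rw [or_iff_not_imp_right]
  intro hx
  push Not at hx
  obtain ⟨b, hb, hb4⟩ := hx
  have hi : (Subgroup.zpowers a).index = 2 := aux_index_s19 hc (by rw [Nat.card_zpowers, ha])
  have hN : (Subgroup.zpowers a).Normal := Subgroup.normal_of_index_eq_two hi
  obtain ⟨m, hm⟩ := Subgroup.mem_zpowers_iff.1 (Subgroup.sq_mem_of_index_two hi b)
  obtain ⟨r, hr⟩ := Subgroup.mem_zpowers_iff.1 (hN.conj_mem' a (Subgroup.mem_zpowers a) b)
  have hconj : ∀ z : ℤ, b⁻¹ * a ^ z * b = a ^ (r * z) := by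
    intro z
    rw [zpow_mul, hr]
    have := conj_zpow (i := z) (a := b⁻¹) (b := a)
    rw [inv_inv] at this
    exact this.symm
  have h2n : (2 : ℤ) ^ n = 2 * 2 ^ (n - 1) := by
    rw [← pow_succ']; congr 1; omega
  have h4n : (2 : ℤ) ^ (n - 1) = 4 * 2 ^ (n - 3) := by
    have : (4 : ℤ) = 2 ^ 2 := by norm_num
    rw [this, ← pow_add]; congr 1; omega
  have hrr : (2 : ℤ) ^ n ∣ r * r - 1 := by
    rw [← hone, zpow_sub, zpow_one, ← hconj, ← mul_one r, ← hconj, zpow_one, mul_inv_eq_one]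
    have : b⁻¹ * (b⁻¹ * a * b) * b = (b ^ 2)⁻¹ * a * b ^ 2 := by
      simp only [pow_two, mul_inv_rev, mul_assoc]
    rw [this, ← hm]
    group
  have hrm : (2 : ℤ) ^ n ∣ (r - 1) * m := by
    rw [← hone, sub_mul, one_mul, zpow_sub, ← hconj, hm]
    group
  rcases aux_sq hn hrr with h1 | h1
  · -- main case
    obtain ⟨c, hc1⟩ := h1
    have hmeven : Even m := by
      by_contra hodd
      rw [Int.not_even_iff_odd] at hodd
      apply hnc
      apply isCyclic_of_orderOf_eq_card b
      rw [hc]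
      apply orderOf_eq_prime_pow
      · have : b ^ 2 ^ n = a ^ (m * 2 ^ (n - 1)) := by
          rw [zpow_mul, hm, ← zpow_natCast, ← zpow_natCast, ← zpow_mul]
          congr 1
        rw [this, hone]
        intro hd
        rw [h2n, mul_comm m, mul_comm] at hd
        have := Int.dvd_of_mul_dvd_mul_left (by positivity) hd
        rw [Int.odd_iff] at hodd
        omega
      · rw [← hc]; exact pow_card_eq_one'
    obtain ⟨m', rfl⟩ := hmeven
    have hu : Odd (1 + 2 * (2 ^ (n - 3) * c)) := ⟨2 ^ (n - 3) * c, by ring⟩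
    obtain ⟨p, q, hpq⟩ := aux_cop n hu
    have hr1 : r + 1 = 2 * (1 + 2 * (2 ^ (n - 3) * c)) := by
      rw [h4n] at hc1
      linarith
    set u := 1 + 2 * (2 ^ (n - 3) * c) with hudef
    have hj : (2 : ℤ) ^ n ∣ (m' + m') + (r * (- m' * q) + (- m' * q)) := by
      refine ⟨2 * m' * p, ?_⟩
      have : (m' + m') + (r * (- m' * q) + (- m' * q)) = 2 * m' - m' * q * (r + 1) := by ring
      rw [this, hr1]
      linear_combination (- 2 * m') * hpq
    set j := - m' * q with hjdef
    refine ⟨b * a ^ j, ?_, ?_, ?_⟩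
    · intro h
      exact hb ((Subgroup.mul_mem_cancel_right _ (Subgroup.zpow_mem _ (Subgroup.mem_zpowers a) j)).1 h)
    · have : (b * a ^ j) ^ 2 = b ^ 2 * (b⁻¹ * a ^ j * b) * a ^ j := by
        rw [pow_two, pow_two]; group
      rw [this, hconj, ← hm, ← zpow_add, ← zpow_add, add_assoc, hone]
      exact hj
    · have e : (b * a ^ j)⁻¹ * a * (b * a ^ j) = a ^ r := by
        have : (b * a ^ j)⁻¹ * a * (b * a ^ j) = (a ^ j)⁻¹ * (b⁻¹ * a * b) * a ^ j := by group
        rw [this, ← hr]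
        group
      rw [e]
      rcases Int.even_or_odd' c with ⟨d, rfl | rfl⟩
      · left
        have : a ^ (r - 1) = 1 := by
          rw [hone, hc1, h2n]
          exact ⟨d, by ring⟩
        rwa [zpow_sub, zpow_one, mul_inv_eq_one] at this
      · right
        have : a ^ (r - (1 + 2 ^ (n - 1) : ℕ)) = 1 := by
          rw [hone, h2n]
          refine ⟨d, ?_⟩
          push_cast
          linear_combination hc1
        rwa [zpow_sub, zpow_natCast, mul_inv_eq_one] at this
  · exfalso
    apply hb4
    obtain ⟨c, hc1⟩ := h1
    have hu : Odd (2 * (2 ^ (n - 3) * c) - 1) := ⟨2 ^ (n - 3) * c - 1, by ring⟩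
    have hr1 : r - 1 = 2 * (2 * (2 ^ (n - 3) * c) - 1) := by
      rw [h4n] at hc1
      linarith
    have : (2 : ℤ) ^ n ∣ 2 * m := by
      rw [hr1] at hrm
      apply (aux_cop n hu).dvd_of_dvd_mul_left
      have e3 : (2 * (2 ^ (n - 3) * c) - 1) * (2 * m) = 2 * (2 * (2 ^ (n - 3) * c) - 1) * m := by ring
      rw [e3]
      exact hrm
    have e : b ^ 4 = a ^ (2 * m) := by
      rw [mul_comm, zpow_mul, hm]
      group
    rw [e, hone]
    exact this

lemma aux_noncyclic_coatom {n : ℕ} (hn : 3 ≤ n) {G : Type*} [Group G]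
    (hc : Nat.card G = 2 ^ (n + 1)) (hnc : ¬ IsCyclic G) :
    ∃ M : Subgroup G, IsCoatom M ∧ ¬ IsCyclic M := by
  have : Finite G := Nat.finite_of_card_ne_zero (by rw [hc]; positivity)
  by_contra! hcon
  have hgen : ∀ M : Subgroup G, IsCoatom M → ∃ c, orderOf c = 2 ^ n ∧ M = Subgroup.zpowers c := by
    intro M hM
    obtain ⟨c, hc'⟩ := (Subgroup.isCyclic_iff_exists_zpowers_eq_top M).1 (hcon M hM)
    exact ⟨c, by rw [← Nat.card_zpowers, hc', aux_card_coatom hc hM], hc'.symm⟩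
  have h8 : 2 ^ 3 ∣ 2 ^ n := pow_dvd_pow 2 hn
  obtain ⟨M, hM, -⟩ := aux_mem_coatom hnc 1
  obtain ⟨a, ha, rfl⟩ := hgen M hM
  have hi := aux_index_s19 hc (aux_card_coatom hc hM)
  rcases aux_tri hn hc hnc ha with ⟨b, hb, hb2, -⟩ | h
  · obtain ⟨M₂, hM₂, hbM⟩ := aux_mem_coatom hnc b
    obtain ⟨c, hc2, rfl⟩ := hgen M₂ hM₂
    obtain ⟨i, hi'⟩ := mem_powers_iff_mem_zpowers.2 hbM
    have hi' : c ^ i = b := hi'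
    rcases Nat.even_or_odd' i with ⟨j, rfl | rfl⟩
    · apply hb
      rw [← hi', pow_mul]
      exact Subgroup.pow_mem _ (Subgroup.sq_mem_of_index_two hi c) _
    · rw [← hi', ← pow_mul, ← orderOf_dvd_iff_pow_eq_one, hc2] at hb2
      have := h8.trans hb2
      omega
  · obtain ⟨M₂, M₃, hM₂, -, hne, -⟩ := aux_three hnc hM
    obtain ⟨c, hc2, rfl⟩ := hgen M₂ hM₂
    have hcM : c ∉ Subgroup.zpowers a := by
      intro hcm
      exact aux_not_le hM hM₂ hne ((Subgroup.zpowers_le).2 hcm)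
    have := h c hcM
    rw [← orderOf_dvd_iff_pow_eq_one, hc2] at this
    have := h8.trans this
    omega

lemma aux_weak {n : ℕ} (hn : 2 ≤ n) : ∀ {G : Type*} [Group G],
    Nat.card G = 2 ^ (n + 1) → ¬ IsCyclic G → 3 * n ≤ Nat.card (Subgroup G) + 1 := by
  induction n, hn using Nat.le_induction with
  | base =>
    intro G _ hc hnc
    have : Finite G := Nat.finite_of_card_ne_zero (by rw [hc]; positivity)
    obtain ⟨M, hM, -⟩ := aux_mem_coatom hnc 1
    have h := aux_three_count hnc hM
    have hMc := aux_card_coatom hc hM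
    have : Nontrivial M := by
      rw [← Finite.one_lt_card_iff_nontrivial, hMc]; norm_num
    have : 1 < Nat.card (Subgroup M) := Finite.one_lt_card
    omega
  | succ n hn ih =>
    intro G _ hc hnc
    have : Finite G := Nat.finite_of_card_ne_zero (by rw [hc]; positivity)
    obtain ⟨M, hM, hMnc⟩ := aux_noncyclic_coatom (by omega) hc hnc
    have h := aux_three_count hnc hM
    have := ih (aux_card_coatom hc hM) hMnc
    omega

lemma aux_caseB {n : ℕ} (hn : 4 ≤ n) {G : Type*} [Group G] (hc : Nat.card G = 2 ^ (n + 1))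
    (hnc : ¬ IsCyclic G) (hB : ∀ M : Subgroup G, IsCoatom M → ¬ IsCyclic M) :
    3 * (n + 1) ≤ Nat.card (Subgroup G) := by
  have : Finite G := Nat.finite_of_card_ne_zero (by rw [hc]; positivity)
  obtain ⟨M, hM, -⟩ := aux_mem_coatom hnc 1
  obtain ⟨k, rfl⟩ : ∃ k, n = k + 2 := ⟨n - 2, by omega⟩
  have h := aux_big_count (k := k) hc hnc hM (by omega) (by
    intro x _
    rw [← orderOf_dvd_iff_pow_eq_one]
    have h1 : orderOf x ∣ 2 ^ (k + 2 + 1) := hc ▸ orderOf_dvd_natCard x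
    obtain ⟨i, hi, hi2⟩ := (Nat.dvd_prime_pow Nat.prime_two).1 h1
    rw [hi2]
    apply pow_dvd_pow
    by_contra hcon
    rcases (show i = k + 2 ∨ i = k + 2 + 1 by omega) with rfl | rfl
    · exact hB (Subgroup.zpowers x) (aux_coatom hc (by rw [Nat.card_zpowers, hi2])) inferInstance
    · exact hnc (isCyclic_of_orderOf_eq_card x (by rw [hi2, hc])))
  have h2 := aux_weak (n := k + 1) (by omega) (aux_card_coatom hc hM) (hB M hM)
  rw [Nat.add_sub_cancel_left] at h
  omega

lemma aux_iso {n : ℕ} {G : Type*} [Group G] (hc : Nat.card G = 2 ^ (n + 1))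
    {a b : G} (ha : orderOf a = 2 ^ n) (hb : b ∉ Subgroup.zpowers a) (hb2 : orderOf b = 2)
    (hab : b⁻¹ * a * b = a) : Nonempty (G ≃* Multiplicative (ZMod (2 ^ n) × ZMod 2)) := by
  have : Finite G := Nat.finite_of_card_ne_zero (by rw [hc]; positivity)
  have hcomm : Commute a b := by
    have : b * (b⁻¹ * a * b) = b * a := by rw [hab]
    show a * b = b * a
    rw [← this]; group
  have hcm : ∀ (x : Subgroup.zpowers a) (y : Subgroup.zpowers b),
      Commute ((Subgroup.zpowers a).subtype x) ((Subgroup.zpowers b).subtype y) := by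
    rintro ⟨x, i, rfl⟩ ⟨y, j, rfl⟩
    exact (hcomm.zpow_zpow i j)
  let f := MonoidHom.noncommCoprod (Subgroup.zpowers a).subtype (Subgroup.zpowers b).subtype hcm
  have hinj : Function.Injective f := by
    rw [MonoidHom.noncommCoprod_injective]
    refine ⟨Subtype.val_injective, Subtype.val_injective, ?_⟩
    rw [Subgroup.range_subtype, Subgroup.range_subtype, Subgroup.disjoint_def]
    intro x hx1 hx2
    obtain ⟨j, hj⟩ := mem_powers_iff_mem_zpowers.2 hx2
    have hj : b ^ j = x := hj
    have hbb : b ^ 2 = 1 := hb2 ▸ pow_orderOf_eq_one b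
    rcases Nat.even_or_odd' j with ⟨i, rfl | rfl⟩
    · rw [← hj, pow_mul, hbb, one_pow]
    · rw [pow_succ, pow_mul, hbb, one_pow, one_mul] at hj
      exact absurd (hj ▸ hx1) hb
  have hbij : Function.Bijective f := by
    have := Fintype.ofFinite G
    rw [Nat.bijective_iff_injective_and_card]
    refine ⟨hinj, ?_⟩
    rw [Nat.card_prod, Nat.card_zpowers, Nat.card_zpowers, ha, hb2, hc, pow_succ]
  have e1 : Subgroup.zpowers a ≃* Multiplicative (ZMod (2 ^ n)) :=
    mulEquivOfCyclicCardEq (by rw [Nat.card_zpowers, ha]; simp)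
  have e2 : Subgroup.zpowers b ≃* Multiplicative (ZMod 2) :=
    mulEquivOfCyclicCardEq (by rw [Nat.card_zpowers, hb2]; simp)
  exact ⟨(MulEquiv.ofBijective f hbij).symm.trans
    ((MulEquiv.prodCongr e1 e2).trans (MulEquiv.prodMultiplicative _ _).symm)⟩

theorem two_group_strict_subgroup_bound
    (lam : ℕ) (hlam : 5 ≤ lam)
    (G : Type*) [Group G] (hcard : Nat.card G = 2 ^ lam)
    (hnc : ¬ IsCyclic G)
    (hnab : ¬ Nonempty (G ≃* Multiplicative (ZMod (2 ^ (lam - 1)) × ZMod 2)))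
    (hnmod : ¬ ∃ a b : G, orderOf a = 2 ^ (lam - 1) ∧ orderOf b = 2 ∧
      b⁻¹ * a * b = a ^ (1 + 2 ^ (lam - 2)) ∧ Subgroup.closure {a, b} = ⊤) :
    3 * lam - 1 < Nat.card (Subgroup G) := by
  obtain ⟨n, rfl⟩ : ∃ n, lam = n + 1 := ⟨lam - 1, by omega⟩
  have : Finite G := Nat.finite_of_card_ne_zero (by rw [hcard]; positivity)
  simp only [Nat.add_sub_cancel] at hnab hnmod
  rw [show n + 1 - 2 = n - 1 by omega] at hnmod
  by_cases hB : ∀ M : Subgroup G, IsCoatom M → ¬ IsCyclic M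
  · have := aux_caseB (by omega) hcard hnc hB
    omega
  · push Not at hB
    obtain ⟨M, hM, hMc⟩ := hB
    obtain ⟨a, rfl⟩ := (Subgroup.isCyclic_iff_exists_zpowers_eq_top M).1 hMc
    have ha : orderOf a = 2 ^ n := by rw [← Nat.card_zpowers, aux_card_coatom hcard hM]
    rcases aux_tri (by omega) hcard hnc ha with ⟨b, hb, hb2, hbr⟩ | h
    · exfalso
      have hbo : orderOf b = 2 := orderOf_eq_prime hb2 (by rintro rfl; exact hb (one_mem _))
      rcases hbr with hbr | hbr
      · exact hnab (aux_iso hcard ha hb hbo hbr)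
      · refine hnmod ⟨a, b, ha, hbo, hbr, ?_⟩
        apply hM.2
        refine lt_of_le_of_ne ?_ ?_
        · rw [Subgroup.zpowers_le]
          exact Subgroup.subset_closure (by simp)
        · intro h
          apply hb
          rw [h]
          exact Subgroup.subset_closure (by simp)
    · have h1 := aux_big_count (k := 1) hcard hnc hM (by omega) (by simpa using h)
      have h2 := aux_cyclic_count a ha
      have h3 : ∀ m, 4 ≤ m → 2 * m ≤ 2 ^ (m - 1) := by
        intro m hm
        induction m, hm using Nat.le_induction with
        | base => norm_num
        | succ m hm ih =>
          obtain ⟨t, rfl⟩ : ∃ t, m = t + 1 := ⟨m - 1, by omega⟩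
          simp only [Nat.add_sub_cancel] at ih ⊢
          rw [pow_succ]
          omega
      have := h3 n (by omega)
      omega
end
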